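/- Let M be an integral model of a multi-filtered K-vector space (V, Fil_i^•), let π ∈ 𝔪, and let 0 → B̄ → M̄ → Ḡ → 0 be a short exact sequence of k-vector spaces. The following are equivalent: (1) the sequence is liftable modulo π; (2) there exists a splitting of O-modules M = B ⊕ G which reduces modulo 𝔪 to the given sequence (B reduces to B̄ and G to Ḡ), such that for all i, j and every v̄ ∈ B̄ ∩ Fil̄_i^j there exists a lift v ∈ Fil_i^j ∩ M of v̄ with p₂(v) ∈ πG, where p₂ : M → G is the projection; (3) the same as (2) except that v̄ is only required to range over a chosen basis of B̄ ∩ Fil̄_i^j for each i and j. -/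

import Mathlib

/-!
Write `M̃ = M/πM`. The projection of `v` to `G` along `B` lies in `πG` exactly when `v` agrees
modulo `π` with an element of `B` (`exists_projection_eq_smul_iff`). So a splitting `M = B ⊕ G`
satisfies the lifting condition on the filtrations exactly when the image `B̃` of `B` in `M̃`
satisfies the one in the definition of liftability. The equivalence of liftability with the existence
of a splitting then comes down to a correspondence between direct summands of `M` and submodules
of `M̃` with flat quotient:

* if `M = B ⊕ G`, the quotient of `M̃` by the image of `B` is a retract of the flat
  `O/π`-module `M̃`, hence flat (`flat_quotient_span_image`);
* conversely, a finite flat quotient of `M̃` over the local ring `O/π` is free, and its quotient map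
  lifts to a split surjection from `M` onto a free `O`-module by Nakayama's lemma; the kernel is
  the required summand (`exists_isCompl_image_eq`).

For the version with bases, the vectors that admit a lift of the required kind form a `k`-subspace
of `M̄` (`mem_span_iff_exists_lift`), so it is enough to find lifts for a basis.
-/

open Module Submodule

section FilteredDefs

variable (F : Type*) [CommRing F] {V : Type*} [AddCommGroup V] [Module F V] {s : ℕ}

/-- The weight of a multi-filtered space: `w = Σ_i Σ_j j · dim (Fil_i^j / Fil_i^{j+1})`
(the filtrations are assumed to vanish at step `l`). -/
noncomputable def filWeight (Fil : Fin s → ℕ → Submodule F V) (l : ℕ) : ℕ :=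
  ∑ i : Fin s, ∑ j ∈ Finset.range (l + 1),
    j * Module.finrank F ((Fil i j) ⧸ (Submodule.comap (Fil i j).subtype (Fil i (j + 1))))

/-- The slope `μ = w / dim`. -/
noncomputable def filSlope (Fil : Fin s → ℕ → Submodule F V) (l : ℕ) : ℚ :=
  (filWeight F Fil l : ℚ) / (Module.finrank F V : ℚ)

/-- The filtrations induced on a subspace `W ⊆ V`. -/
def inducedFil (Fil : Fin s → ℕ → Submodule F V) (W : Submodule F V) :
    Fin s → ℕ → Submodule F W := fun i j => (Fil i j).comap W.subtype

/-- Semistability: every nonzero subspace, with the induced filtrations, has slope at most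
that of the whole space. -/
def Semistable (Fil : Fin s → ℕ → Submodule F V) (l : ℕ) : Prop :=
  ∀ W : Submodule F V, W ≠ ⊥ →
    filSlope F (inducedFil F Fil W) l ≤ filSlope F Fil l

end FilteredDefs

section Models

variable (O : Type*) [CommRing O] [IsDomain O] [ValuationRing O]
variable (K : Type*) [Field K] [Algebra O K] [IsFractionRing O K]
variable {V : Type*} [AddCommGroup V] [Module K V] [Module O V] [IsScalarTower O K V]
variable {s : ℕ}

/-- An integral model: a finite free `O`-submodule of `V` spanning `V` over `K`. -/
def IsIntegralModel (M : Submodule O V) : Prop :=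
  Module.Finite O M ∧ Module.Free O M ∧ Submodule.span K (M : Set V) = ⊤

/-- The filtration induced on an integral model `M`: `Fil_i^j ∩ M`. -/
def filM (Fil : Fin s → ℕ → Submodule K V) (M : Submodule O V) :
    Fin s → ℕ → Submodule O M :=
  fun i j => ((Fil i j).restrictScalars O).comap M.subtype

/-- The reduction `M̄ = M ⊗_O k = M / 𝔪M`. -/
abbrev Mbar (M : Submodule O V) : Type _ :=
  M ⧸ ((IsLocalRing.maximalIdeal O) • ⊤ : Submodule O M)

noncomputable instance (M : Submodule O V) :
    Module (IsLocalRing.ResidueField O) (Mbar O M) :=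
  inferInstanceAs (Module (O ⧸ IsLocalRing.maximalIdeal O)
    (M ⧸ ((IsLocalRing.maximalIdeal O) • ⊤ : Submodule O M)))

instance (M : Submodule O V) :
    IsScalarTower O (IsLocalRing.ResidueField O) (Mbar O M) :=
  inferInstanceAs (IsScalarTower O (O ⧸ IsLocalRing.maximalIdeal O)
    (M ⧸ ((IsLocalRing.maximalIdeal O) • ⊤ : Submodule O M)))

/-- The reduction map `M → M̄`. -/
noncomputable def redMap (M : Submodule O V) : M →ₗ[O] Mbar O M :=
  Submodule.mkQ _

/-- The induced filtration `Fil̄_i^j` on the reduction `M̄`: the image of `Fil_i^j ∩ M`. -/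
noncomputable def filBar (Fil : Fin s → ℕ → Submodule K V) (M : Submodule O V) :
    Fin s → ℕ → Submodule (IsLocalRing.ResidueField O) (Mbar O M) :=
  fun i j => Submodule.span _ (redMap O M '' (filM O K Fil M i j : Set M))

/-- The quotient ring `O/π`. -/
abbrev Oq (π : O) : Type _ := O ⧸ Ideal.span {π}

/-- The quotient `M̃ = M/πM`. -/
abbrev Mtil (M : Submodule O V) (π : O) : Type _ :=
  M ⧸ ((Ideal.span {π}) • ⊤ : Submodule O M)

/-- The reduction map `M → M̃`. -/
noncomputable def redMapTil (M : Submodule O V) (π : O) : M →ₗ[O] Mtil O M π :=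
  Submodule.mkQ _

/-- The induced filtration `Fil̃_i^j` on `M̃`: the image of `Fil_i^j ∩ M`. -/
noncomputable def filTil (Fil : Fin s → ℕ → Submodule K V) (M : Submodule O V) (π : O) :
    Fin s → ℕ → Submodule (Oq O π) (Mtil O M π) :=
  fun i j => Submodule.span _ (redMapTil O M π '' (filM O K Fil M i j : Set M))

/-- The natural map `M̃ = M/πM → M̄ = M/𝔪M` for `π ∈ 𝔪`. -/
noncomputable def thetaMap (M : Submodule O V) (π : O)
    (hπ : π ∈ IsLocalRing.maximalIdeal O) : Mtil O M π →ₗ[O] Mbar O M :=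
  Submodule.mapQ _ _ LinearMap.id (by
    rw [Submodule.comap_id]
    exact Submodule.smul_mono (Ideal.span_le.mpr (by simpa using hπ)) le_rfl)

/-- The short exact sequence `0 → B̄ → M̄ → Ḡ → 0` of `k`-vector spaces determined by a
subspace `B̄ ⊆ M̄` is liftable modulo `π ∈ 𝔪`: there is a short exact sequence
`0 → B̃ → M̃ → G̃ → 0` of `O/π`-modules with `G̃ = M̃/B̃` flat over `O/π`, reducing modulo `𝔪`
to the given sequence, and such that `Fil̃_i^j ∩ B̃` surjects onto `Fil̄_i^j ∩ B̄`. -/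
def LiftableModulo (Fil : Fin s → ℕ → Submodule K V) (M : Submodule O V) (π : O)
    (hπ : π ∈ IsLocalRing.maximalIdeal O)
    (Bbar : Submodule (IsLocalRing.ResidueField O) (Mbar O M)) : Prop :=
  ∃ Btil : Submodule (Oq O π) (Mtil O M π),
    Module.Flat (Oq O π) ((Mtil O M π) ⧸ Btil) ∧
    thetaMap O M π hπ '' (Btil : Set (Mtil O M π)) = (Bbar : Set (Mbar O M)) ∧
    ∀ i j, thetaMap O M π hπ ''
        ((filTil O K Fil M π i j ⊓ Btil : Submodule (Oq O π) (Mtil O M π)) : Set (Mtil O M π))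
      = ((filBar O K Fil M i j ⊓ Bbar :
          Submodule (IsLocalRing.ResidueField O) (Mbar O M)) : Set (Mbar O M))

end Models

/-! ### Direct summands and flat quotients modulo an ideal -/

/-- Along a surjective ring map, the span over the target ring of the image of a submodule is
just that image. -/
lemma mem_span_image_of_surjective {R S M N : Type*} [CommRing R] [CommRing S] [Algebra R S]
    [AddCommGroup M] [AddCommGroup N] [Module R M] [Module R N] [Module S N]
    [IsScalarTower R S N] (hs : Function.Surjective (algebraMap R S))
    (f : M →ₗ[R] N) (P : Submodule R M) (x : N) :
    x ∈ Submodule.span S (f '' (P : Set M)) ↔ ∃ p ∈ P, f p = x := by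
  refine ⟨fun hx => ?_, ?_⟩
  · induction hx using Submodule.span_induction with
    | mem x h => exact h
    | zero => exact ⟨0, P.zero_mem, map_zero f⟩
    | add x y _ _ hx hy =>
      obtain ⟨p, hp, rfl⟩ := hx
      obtain ⟨q, hq, rfl⟩ := hy
      exact ⟨p + q, P.add_mem hp hq, map_add f p q⟩
    | smul a x _ hx =>
      obtain ⟨p, hp, rfl⟩ := hx
      obtain ⟨r, rfl⟩ := hs a
      exact ⟨r • p, P.smul_mem r hp, by rw [map_smul, algebraMap_smul]⟩
  · rintro ⟨p, hp, rfl⟩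
    exact Submodule.subset_span ⟨p, hp, rfl⟩

lemma mem_span_singleton_smul_top_iff {R M : Type*} [CommRing R] [AddCommGroup M] [Module R M]
    (a : R) (x : M) : x ∈ (Ideal.span {a} • ⊤ : Submodule R M) ↔ ∃ y : M, x = a • y := by
  rw [Submodule.ideal_span_singleton_smul, Submodule.mem_smul_pointwise_iff_exists]
  exact ⟨fun ⟨y, _, h⟩ => ⟨y, h.symm⟩, fun ⟨y, h⟩ => ⟨y, Submodule.mem_top, h.symm⟩⟩

/-- The quotient of `M / IM` by the image of a direct summand `B` is a retract of `M / IM`, via the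
projection to the complement `G`, so flatness of `M` passes to it. -/
lemma flat_quotient_span_image {R M : Type*} [CommRing R] [AddCommGroup M] [Module R M]
    [Module.Flat R M] (I : Ideal R) (B G : Submodule R M) (hc : IsCompl B G) :
    Module.Flat (R ⧸ I) ((M ⧸ (I • ⊤ : Submodule R M)) ⧸
      Submodule.span (R ⧸ I) ((I • ⊤ : Submodule R M).mkQ '' (B : Set M))) := by
  have hs : Function.Surjective (algebraMap R (R ⧸ I)) := Ideal.Quotient.mk_surjective
  have : Module.Flat (R ⧸ I) (M ⧸ (I • ⊤ : Submodule R M)) :=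
    Module.Flat.of_linearEquiv
      ((TensorProduct.quotTensorEquivQuotSMul M I).extendScalarsOfSurjective hs).symm
  -- the projection of `M` onto `G` along `B`, as an endomorphism of `M`, and its reduction
  let q : M →ₗ[R] M := G.subtype ∘ₗ Submodule.projectionOnto G B hc.symm
  have hqB : ∀ b ∈ B, q b = 0 := fun b hb => by
    simp [q, hb]
  have hq : ∀ x, x - q x ∈ B := fun x => by
    have h : Submodule.projectionOnto G B hc.symm (x - q x) = 0 := by
      rw [map_sub]
      exact sub_eq_zero.2 (Submodule.projectionOnto_apply_left hc.symm _).symm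
    exact (Submodule.projectionOnto_apply_eq_zero_iff hc.symm).1 h
  let e : (M ⧸ (I • ⊤ : Submodule R M)) →ₗ[R ⧸ I] (M ⧸ (I • ⊤ : Submodule R M)) :=
    LinearMap.extendScalarsOfSurjective hs
      (Submodule.mapQ _ _ q (Submodule.smul_top_le_comap_smul_top I q))
  have he : ∀ x : M, e ((I • ⊤ : Submodule R M).mkQ x) = (I • ⊤ : Submodule R M).mkQ (q x) :=
    fun x => rfl
  refine Module.Flat.of_retract (Submodule.liftQ _ e ?_) (Submodule.mkQ _) ?_
  · rw [Submodule.span_le]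
    rintro _ ⟨b, hb, rfl⟩
    rw [SetLike.mem_coe, LinearMap.mem_ker, he, hqB b hb, map_zero]
  · refine Submodule.linearMap_qext _ (LinearMap.ext fun y => ?_)
    obtain ⟨x, rfl⟩ := Submodule.mkQ_surjective _ y
    simp only [LinearMap.comp_apply, LinearMap.id_apply, Submodule.mkQ_apply,
      Submodule.liftQ_apply]
    symm
    rw [Submodule.Quotient.eq]
    exact Submodule.subset_span ⟨x - q x, hq x, by rw [map_sub, ← he]; rfl⟩

/-- Over a local ring `R` with `π ∈ 𝔪`, a submodule of `M / πM` with flat quotient lifts to a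
direct summand of the finite free module `M`. The quotient is finite and flat over the local ring
`R / π`, hence free; the quotient map lifts to a map from `M` to a free `R`-module, which is
surjective by Nakayama's lemma, and `B` is its kernel. -/
lemma exists_isCompl_image_eq {R M : Type*} [CommRing R] [IsLocalRing R] [AddCommGroup M]
    [Module R M] [Module.Finite R M] [Module.Free R M] (π : R)
    (hπ : π ∈ IsLocalRing.maximalIdeal R)
    (T : Submodule (R ⧸ Ideal.span {π}) (M ⧸ (Ideal.span {π} • ⊤ : Submodule R M)))
    [Module.Flat (R ⧸ Ideal.span {π}) ((M ⧸ (Ideal.span {π} • ⊤ : Submodule R M)) ⧸ T)] :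
    ∃ B G : Submodule R M, IsCompl B G ∧
      (Ideal.span {π} • ⊤ : Submodule R M).mkQ '' (B : Set M) = (T : Set _) := by
  have hI : Ideal.span {π} ≤ IsLocalRing.maximalIdeal R := by
    simpa [Ideal.span_le] using hπ
  have hne : Ideal.span {π} ≠ ⊤ := fun h =>
    (IsLocalRing.maximalIdeal.isMaximal R).ne_top (top_le_iff.1 (h ▸ hI))
  have : Nontrivial (R ⧸ Ideal.span {π}) := Ideal.Quotient.nontrivial_iff.2 hne
  have : IsLocalRing (R ⧸ Ideal.span {π}) :=
    IsLocalRing.of_surjective' (Ideal.Quotient.mk _) Ideal.Quotient.mk_surjective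
  set A := R ⧸ Ideal.span {π}
  have : Module.Free A ((M ⧸ (Ideal.span {π} • ⊤ : Submodule R M)) ⧸ T) :=
    Module.free_of_flat_of_isLocalRing
  let b := Module.finBasis A ((M ⧸ (Ideal.span {π} • ⊤ : Submodule R M)) ⧸ T)
  let n := Module.finrank A ((M ⧸ (Ideal.span {π} • ⊤ : Submodule R M)) ⧸ T)
  let c : M →ₗ[R] (Fin n → A) :=
    (b.equivFun.toLinearMap ∘ₗ T.mkQ).restrictScalars R ∘ₗ Submodule.mkQ _
  have hc_surj : Function.Surjective c :=
    (b.equivFun.surjective.comp T.mkQ_surjective).comp (Submodule.mkQ_surjective _)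
  have hc_ker : ∀ x, c x = 0 ↔ (Ideal.span {π} • ⊤ : Submodule R M).mkQ x ∈ T := fun x => by
    change b.equivFun (T.mkQ _) = 0 ↔ _
    rw [LinearEquiv.map_eq_zero_iff, Submodule.mkQ_apply, Submodule.Quotient.mk_eq_zero]
  let p : (Fin n → R) →ₗ[R] (Fin n → A) := (Algebra.linearMap R A).compLeft (Fin n)
  have hp_surj : Function.Surjective p := fun y => by
    choose z hz using fun i => Ideal.Quotient.mk_surjective (y i)
    exact ⟨z, funext hz⟩
  have hp_ker : ∀ y, p y = 0 → ∃ z, y = π • z := fun y hy => by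
    have h : ∀ i, ∃ z, y i = π * z := fun i => by
      have : Ideal.Quotient.mk (Ideal.span {π}) (y i) = 0 := congrFun hy i
      exact Ideal.mem_span_singleton.1 (Ideal.Quotient.eq_zero_iff_mem.1 this)
    choose z hz using h
    exact ⟨z, funext hz⟩
  have hp_smul : ∀ z, p (π • z) = 0 := fun z => by
    ext i
    change Ideal.Quotient.mk (Ideal.span {π}) (π * z i) = 0
    exact Ideal.Quotient.eq_zero_iff_mem.2
      (Ideal.mul_mem_right _ _ (Ideal.mem_span_singleton_self π))
  obtain ⟨f, hf⟩ := Module.projective_lifting_property p c hp_surj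
  have hf' : ∀ x, p (f x) = c x := fun x => LinearMap.congr_fun hf x
  have hf_range : LinearMap.range f = ⊤ := by
    refine top_le_iff.1 (Submodule.le_of_le_smul_of_le_jacobson_bot (I := Ideal.span {π})
      Module.Finite.fg_top (hI.trans (IsLocalRing.maximalIdeal_le_jacobson _)) fun y _ => ?_)
    obtain ⟨x, hx⟩ := hc_surj (p y)
    obtain ⟨z, hz⟩ := hp_ker (y - f x) (by rw [map_sub, hf', hx, sub_self])
    rw [sub_eq_iff_eq_add'] at hz
    rw [hz]
    exact Submodule.add_mem_sup ⟨x, rfl⟩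
      ((mem_span_singleton_smul_top_iff π _).2 ⟨z, rfl⟩)
  obtain ⟨g, hg⟩ := LinearMap.exists_rightInverse_of_surjective f hf_range
  have hg' : ∀ y, f (g y) = y := fun y => LinearMap.congr_fun hg y
  refine ⟨LinearMap.ker f, LinearMap.range g, ⟨?_, ?_⟩, ?_⟩
  · rw [Submodule.disjoint_def]
    rintro _ hx ⟨y, rfl⟩
    rw [LinearMap.mem_ker, hg'] at hx
    rw [hx, map_zero]
  · rw [codisjoint_iff, eq_top_iff]
    intro x _
    rw [← sub_add_cancel x (g (f x))]
    exact Submodule.add_mem_sup (by simp [hg']) ⟨_, rfl⟩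
  · ext y
    constructor
    · rintro ⟨x, hx, rfl⟩
      have hx : f x = 0 := hx
      exact (hc_ker x).1 (by rw [← hf', hx, map_zero])
    · intro hy
      obtain ⟨x, rfl⟩ := Submodule.mkQ_surjective _ y
      obtain ⟨z, hz⟩ := hp_ker (f x) (by rw [hf']; exact (hc_ker x).2 hy)
      -- correct `x` by an element of `πM` so as to land in the kernel of `f`
      refine ⟨x - π • g z, ?_, ?_⟩
      · rw [SetLike.mem_coe, LinearMap.mem_ker, map_sub, map_smul, hg', hz, sub_self]
      · rw [map_sub, sub_eq_self, Submodule.mkQ_apply, Submodule.Quotient.mk_eq_zero]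
        exact (mem_span_singleton_smul_top_iff π _).2 ⟨_, rfl⟩

/-- The projection to `G` along `B` lies in `πG` exactly when `v` agrees modulo `π` with an element
of `B`. -/
lemma exists_projection_eq_smul_iff {R M : Type*} [CommRing R] [AddCommGroup M] [Module R M]
    (π : R) (B G : Submodule R M) (hc : IsCompl G B) (v : M) :
    (∃ g : G, Submodule.linearProjOfIsCompl G B hc v = π • g) ↔
      (Ideal.span {π} • ⊤ : Submodule R M).mkQ v ∈
        (Ideal.span {π} • ⊤ : Submodule R M).mkQ '' (B : Set M) := by
  change (∃ g : G, Submodule.projectionOnto G B hc v = π • g) ↔ _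
  constructor
  · rintro ⟨g, hg⟩
    refine ⟨v - π • (g : M), ?_, ?_⟩
    · refine (Submodule.projectionOnto_apply_eq_zero_iff hc).1 ?_
      rw [map_sub, map_smul, hg, Submodule.projectionOnto_apply_left, sub_self]
    · rw [map_sub, sub_eq_self, Submodule.mkQ_apply, Submodule.Quotient.mk_eq_zero]
      exact (mem_span_singleton_smul_top_iff π _).2 ⟨_, rfl⟩
  · rintro ⟨b, hb, hbv⟩
    obtain ⟨m, hm⟩ := (mem_span_singleton_smul_top_iff π _).1
      ((Submodule.Quotient.eq _).1 hbv.symm)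
    refine ⟨Submodule.projectionOnto G B hc m, ?_⟩
    rw [← map_smul, ← hm, map_sub, (Submodule.projectionOnto_apply_eq_zero_iff hc).2 hb, sub_zero]

/-! ### Reductions of an integral model and its filtrations -/

section Reduction

variable {O : Type*} [CommRing O] [IsDomain O] [ValuationRing O]
variable {K : Type*} [Field K] [Algebra O K] [IsFractionRing O K]
variable {V : Type*} [AddCommGroup V] [Module K V] [Module O V] [IsScalarTower O K V]
variable {s : ℕ}

lemma redMap_surjective (M : Submodule O V) : Function.Surjective (redMap O M) :=
  Submodule.mkQ_surjective _

lemma thetaMap_redMapTil (M : Submodule O V) (π : O) (hπ : π ∈ IsLocalRing.maximalIdeal O)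
    (x : M) : thetaMap O M π hπ (redMapTil O M π x) = redMap O M x := rfl

lemma mem_filBar {Fil : Fin s → ℕ → Submodule K V} {M : Submodule O V} {i : Fin s} {j : ℕ}
    {x : Mbar O M} :
    x ∈ filBar O K Fil M i j ↔ ∃ v ∈ filM O K Fil M i j, redMap O M v = x :=
  mem_span_image_of_surjective IsLocalRing.residue_surjective _ _ _

lemma mem_filTil {Fil : Fin s → ℕ → Submodule K V} {M : Submodule O V} {π : O} {i : Fin s}
    {j : ℕ} {x : Mtil O M π} :
    x ∈ filTil O K Fil M π i j ↔ ∃ v ∈ filM O K Fil M i j, redMapTil O M π v = x :=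
  mem_span_image_of_surjective Ideal.Quotient.mk_surjective _ _ _

/-- The reduction modulo `𝔪` of a splitting of `M` is a splitting of `M̄`. -/
lemma isCompl_reduction {M : Submodule O V} {B G : Submodule O M} (hc : IsCompl B G)
    {Bbar : Submodule (IsLocalRing.ResidueField O) (Mbar O M)}
    (hB : redMap O M '' (B : Set M) = (Bbar : Set (Mbar O M))) :
    IsCompl Bbar
      (Submodule.span (IsLocalRing.ResidueField O) (redMap O M '' (G : Set M))) := by
  constructor
  · rw [Submodule.disjoint_def]
    intro x hx hx'
    rw [← SetLike.mem_coe, ← hB] at hx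
    obtain ⟨b, hb, rfl⟩ := hx
    obtain ⟨g, hg, hgb⟩ :=
      (mem_span_image_of_surjective IsLocalRing.residue_surjective _ _ _).1 hx'
    have h : b - g ∈ (IsLocalRing.maximalIdeal O • ⊤ : Submodule O M) :=
      (Submodule.Quotient.eq _).1 hgb.symm
    -- the projection to `B` sends `b - g` to `b` and preserves `𝔪M`
    have h' := Submodule.smul_top_le_comap_smul_top (IsLocalRing.maximalIdeal O)
      (B.subtype ∘ₗ Submodule.projectionOnto B G hc) h
    have e : (B.subtype ∘ₗ Submodule.projectionOnto B G hc) (b - g) = b := by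
      rw [LinearMap.comp_apply, map_sub, (Submodule.projectionOnto_apply_eq_zero_iff hc).2 hg,
        sub_zero]
      exact congrArg Subtype.val (Submodule.projectionOnto_apply_left hc ⟨b, hb⟩)
    rw [Submodule.mem_comap, e] at h'
    exact (Submodule.Quotient.mk_eq_zero _).2 h'
  · rw [codisjoint_iff, eq_top_iff]
    intro x _
    obtain ⟨v, rfl⟩ := redMap_surjective M x
    obtain ⟨b, hb, g, hg, rfl⟩ :=
      Submodule.mem_sup.1 (hc.sup_eq_top ▸ Submodule.mem_top : v ∈ B ⊔ G)
    rw [map_add]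
    refine Submodule.add_mem_sup ?_ (Submodule.subset_span ⟨g, hg, rfl⟩)
    rw [← SetLike.mem_coe, ← hB]
    exact ⟨b, hb, rfl⟩

/-- The vectors of `M̄` admitting a lift in `Fil_i^j ∩ M` with projection in `πG` form a
`k`-subspace. -/
lemma mem_span_iff_exists_lift (Fil : Fin s → ℕ → Submodule K V) (M : Submodule O V) (π : O)
    (B G : Submodule O M) (hc : IsCompl G B) (i : Fin s) (j : ℕ) (x : Mbar O M) :
    x ∈ Submodule.span (IsLocalRing.ResidueField O) (redMap O M ''
        ((filM O K Fil M i j ⊓ (LinearMap.range (LinearMap.lsmul O G π)).comap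
          (Submodule.linearProjOfIsCompl G B hc) : Submodule O M) : Set M)) ↔
      ∃ v : M, v ∈ filM O K Fil M i j ∧ redMap O M v = x ∧
        ∃ g : G, Submodule.linearProjOfIsCompl G B hc v = π • g := by
  rw [mem_span_image_of_surjective IsLocalRing.residue_surjective]
  constructor
  · rintro ⟨v, ⟨hv, g, hg⟩, rfl⟩
    exact ⟨v, hv, rfl, g, hg.symm⟩
  · rintro ⟨v, hv, rfl, g, hg⟩
    exact ⟨v, ⟨hv, g, hg.symm⟩, rfl⟩

end Reduction

/-- Characterization of liftability modulo `π`: the sequence `0 → B̄ → M̄ → Ḡ → 0` is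
liftable modulo `π` iff there is a splitting `M = B ⊕ G` reducing modulo `𝔪` to the given
sequence such that every `v̄ ∈ B̄ ∩ Fil̄_i^j` lifts to some `v ∈ Fil_i^j ∩ M` with
`p₂(v) ∈ πG`; and this in turn holds iff it holds with `v̄` ranging only over a chosen
basis of each `B̄ ∩ Fil̄_i^j`. -/
theorem liftable_iff_splitting_characterization
    (O : Type*) [CommRing O] [IsDomain O] [ValuationRing O]
    (K : Type*) [Field K] [Algebra O K] [IsFractionRing O K]
    (V : Type*) [AddCommGroup V] [Module K V] [Module O V] [IsScalarTower O K V]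
    [FiniteDimensional K V]
    {s : ℕ} (Fil : Fin s → ℕ → Submodule K V) (l : ℕ)
    (hdec : ∀ i, Antitone (Fil i)) (htop : ∀ i, Fil i 0 = ⊤) (hbot : ∀ i, Fil i l = ⊥)
    (M : Submodule O V) (hM : IsIntegralModel O K M)
    (π : O) (hπ : π ∈ IsLocalRing.maximalIdeal O)
    (Bbar : Submodule (IsLocalRing.ResidueField O) (Mbar O M)) :
    (LiftableModulo O K Fil M π hπ Bbar ↔
      (∃ (B G : Submodule O M) (hc : IsCompl B G),
        redMap O M '' (B : Set M) = (Bbar : Set (Mbar O M)) ∧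
        IsCompl Bbar
          (Submodule.span (IsLocalRing.ResidueField O) (redMap O M '' (G : Set M))) ∧
        ∀ i j, ∀ vbar ∈ filBar O K Fil M i j ⊓ Bbar,
          ∃ v : M, v ∈ filM O K Fil M i j ∧ redMap O M v = vbar ∧
            ∃ g : G, Submodule.linearProjOfIsCompl G B hc.symm v = π • g)) ∧
    ((∃ (B G : Submodule O M) (hc : IsCompl B G),
        redMap O M '' (B : Set M) = (Bbar : Set (Mbar O M)) ∧
        IsCompl Bbar
          (Submodule.span (IsLocalRing.ResidueField O) (redMap O M '' (G : Set M))) ∧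
        ∀ i j, ∀ vbar ∈ filBar O K Fil M i j ⊓ Bbar,
          ∃ v : M, v ∈ filM O K Fil M i j ∧ redMap O M v = vbar ∧
            ∃ g : G, Submodule.linearProjOfIsCompl G B hc.symm v = π • g) ↔
      (∃ (B G : Submodule O M) (hc : IsCompl B G),
        redMap O M '' (B : Set M) = (Bbar : Set (Mbar O M)) ∧
        IsCompl Bbar
          (Submodule.span (IsLocalRing.ResidueField O) (redMap O M '' (G : Set M))) ∧
        ∀ i j, ∃ (n : ℕ)
            (bas : Basis (Fin n) (IsLocalRing.ResidueField O)
              ↥(filBar O K Fil M i j ⊓ Bbar)),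
          ∀ x : Fin n, ∃ v : M, v ∈ filM O K Fil M i j ∧
            redMap O M v = (bas x : Mbar O M) ∧
            ∃ g : G, Submodule.linearProjOfIsCompl G B hc.symm v = π • g)) := by
  have : Module.Finite O M := hM.1
  have : Module.Free O M := hM.2.1
  have : Module.Finite (IsLocalRing.ResidueField O) (Mbar O M) :=
    Module.Finite.of_restrictScalars_finite O _ _
  refine ⟨⟨?_, ?_⟩, ⟨?_, ?_⟩⟩
  · rintro ⟨Btil, hflat, hred, hfil⟩
    obtain ⟨B, G, hc, hB⟩ := exists_isCompl_image_eq π hπ Btil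
    have hBbar : redMap O M '' (B : Set M) = (Bbar : Set (Mbar O M)) := by
      rw [← hred, ← hB, Set.image_image]
      rfl
    refine ⟨B, G, hc, hBbar, isCompl_reduction hc hBbar, fun i j vbar hvbar => ?_⟩
    rw [← SetLike.mem_coe, ← hfil i j] at hvbar
    obtain ⟨vtil, ⟨hvF, hvB⟩, rfl⟩ := hvbar
    obtain ⟨v, hv, rfl⟩ := mem_filTil.1 hvF
    refine ⟨v, hv, rfl, (exists_projection_eq_smul_iff π B G hc.symm v).2 ?_⟩
    rw [hB]
    exact hvB
  · rintro ⟨B, G, hc, hBbar, -, hlift⟩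
    have hBtil : ∀ x, x ∈ Submodule.span (Oq O π) (redMapTil O M π '' (B : Set M)) ↔
        ∃ b ∈ B, redMapTil O M π b = x := fun x =>
      mem_span_image_of_surjective Ideal.Quotient.mk_surjective _ _ _
    have hred : thetaMap O M π hπ ''
        (Submodule.span (Oq O π) (redMapTil O M π '' (B : Set M)) : Set (Mtil O M π)) =
          (Bbar : Set (Mbar O M)) := by
      rw [← hBbar]
      ext x
      constructor
      · rintro ⟨y, hy, rfl⟩
        obtain ⟨b, hb, rfl⟩ := (hBtil y).1 hy
        exact ⟨b, hb, rfl⟩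
      · rintro ⟨b, hb, rfl⟩
        exact ⟨redMapTil O M π b, (hBtil _).2 ⟨b, hb, rfl⟩, rfl⟩
    refine ⟨Submodule.span (Oq O π) (redMapTil O M π '' (B : Set M)),
      flat_quotient_span_image _ B G hc, hred, fun i j => Set.Subset.antisymm ?_ ?_⟩
    · rintro _ ⟨y, ⟨hyF, hyB⟩, rfl⟩
      obtain ⟨v, hv, rfl⟩ := mem_filTil.1 hyF
      refine ⟨mem_filBar.2 ⟨v, hv, rfl⟩, ?_⟩
      rw [← hred]
      exact ⟨_, hyB, rfl⟩
    · intro x hx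
      obtain ⟨v, hv, rfl, hg⟩ := hlift i j x hx
      refine ⟨redMapTil O M π v, ⟨mem_filTil.2 ⟨v, hv, rfl⟩, ?_⟩, rfl⟩
      exact (hBtil _).2 ((exists_projection_eq_smul_iff π B G hc.symm v).1 hg)
  · rintro ⟨B, G, hc, hBbar, hcompl, hlift⟩
    exact ⟨B, G, hc, hBbar, hcompl, fun i j =>
      ⟨_, Module.finBasis _ _, fun x => hlift i j _ (Subtype.property _)⟩⟩
  · rintro ⟨B, G, hc, hBbar, hcompl, hlift⟩
    refine ⟨B, G, hc, hBbar, hcompl, fun i j vbar hvbar => ?_⟩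
    obtain ⟨n, bas, hbas⟩ := hlift i j
    rw [← mem_span_iff_exists_lift]
    have h' : ∑ x, bas.repr ⟨vbar, hvbar⟩ x • (bas x : Mbar O M) = vbar := by
      have h := congrArg (Submodule.subtype _) (bas.sum_repr ⟨vbar, hvbar⟩)
      rwa [map_sum] at h
    rw [← h']
    exact Submodule.sum_mem _ fun x _ => Submodule.smul_mem _ _
      ((mem_span_iff_exists_lift Fil M π B G hc.symm i j _).2 (hbas x))
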